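/- Let 0 < p ≤ 1, α > 0, and let {b_ε}_{ε>0} ⊆ L¹([−π/2, π/2]) be a grazing collision family. Let f₀ ≥ 0 be an even probability density on ℝ whose Fourier transform f̂₀ satisfies: (A) lim_{ξ→0⁺} (1 − f̂₀(ξ))/ξ^{2/(p+1)} = α; and (B) f̂₀ is differentiable on (0,∞) and there exist δ ∈ (0,1) and, for every R > 0, a constant K(R) > 0 such that |∂_ξ f̂₀(ξ)/ξ^{(1−p)/(p+1)} − ∂_ξ f̂₀(τ)/τ^{(1−p)/(p+1)}| ≤ K(R)|ξ−τ|^δ for all ξ, τ ∈ (0, R], ξ ≠ τ. For each ε let f_ε ∈ C¹([0,∞), L¹(ℝ)) be the unique nonnegative solution of the dissipative Kac equation whose Fourier transform satisfies ∂ₜ f̂_ε(ξ,t) = 2∫₀^{π/2} b_ε(θ)(f̂_ε(ξ cos^{p+1}θ, t) f̂_ε(ξ sin^{p+1}θ, t) − f̂_ε(ξ,t)) dθ with f̂_ε(·,0) = f̂₀. Let f̂(ξ,t) = f̂₀(ξ e^{−(p+1)t}) e^{−α|ξ|^{2/(p+1)}(1−e^{−2t})} be the (Fourier transform of the) solution of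 the fractional Fokker–Planck equation ∂ₜ f̂(ξ,t) = −2α|ξ|^{2/(p+1)} f̂(ξ,t) − (p+1) ξ ∂_ξ f̂(ξ,t) with the same initial datum. Then lim_{ε→0} sup_{t≥0, ξ≠0} |f̂_ε(ξ,t) − f̂(ξ,t)|/|ξ|^{2/(p+1)} = 0. -/

import Mathlib

/-!
Write `q = p + 1` and `s = 2 / q`, so that `q s = 2`, and let `φ` be the Fourier transform of the
initial datum. Two identities drive the proof, both consequences of `cos² + sin² = 1`.

* The weight `|ξ|^s` is conserved by the collision rule: its values at `ξ cos^q θ` and `ξ sin^q θ`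
  add up to `|ξ|^s`. Since gain terms are Lipschitz on functions bounded by `1`, the Kac equation
  is a contraction in the metric weighted by `|ξ|^{-s}`, up to the time integral of the residual of
  the approximate solution (`kac_stability`).
* The factor `exp (-α |ξ|^s (1 - e^{-2t}))` is multiplicative under collisions. Hence the residual
  of the Fokker–Planck solution at time `t` is, up to a factor at most `1`, the residual of `φ` at
  frequency `η = ξ e^{-qt}` (`fpSol_residual`). As `|η|^s = |ξ|^s e^{-2t}`, a bound
  `r |η|^s` on the latter is integrable in time, which makes the estimate uniform in `t ≥ 0`.

It remains to see that on `0 < |ξ| ≤ L` the residual of `φ` is at most `C d_ε^δ |ξ|^s`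
(`residual_bound`). In the variable `x^s`, whose value drops by exactly `x^s sin² θ` from `x` to
`x cos^q θ`, condition (B) says that `φ` has a Hölder derivative, and (A) identifies the boundary
value of this derivative at `0` as `-α`. Expanding `φ (x cos^q θ) φ (x sin^q θ) - φ x` to first
order with Cauchy's mean value theorem gives the Fokker–Planck operator times `sin² θ`, with an
error `O(sin^{2+δ} θ)` (`integrand_expansion`); the normalization `∫ b sin² = 1` concludes.
Frequencies `|ξ| > L` are handled by `|f̂_ε - f̂| ≤ 2`, which needs conservation of mass
(`mass_eq_one`).
-/

open Real MeasureTheory Set Filter Topology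

noncomputable section

/-- Fourier transform of an even real density: `f̂(ξ) = ∫ cos(ξv) f(v) dv`. -/
def ftEven (f : ℝ → ℝ) (ξ : ℝ) : ℝ := ∫ v : ℝ, Real.cos (ξ * v) * f v

/-! ### Fourier transforms of densities and conservation of mass -/

theorem ftEven_continuous {f : ℝ → ℝ} (hf : Integrable f) : Continuous (ftEven f) := by
  unfold ftEven
  refine continuous_of_dominated (bound := fun v => |f v|) ?_ ?_ hf.abs ?_
  · intro ξ
    exact (Continuous.aestronglyMeasurable (by fun_prop)).mul hf.aestronglyMeasurable
  · intro ξ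
    refine Eventually.of_forall fun v => ?_
    rw [norm_mul, Real.norm_eq_abs, Real.norm_eq_abs]
    exact mul_le_of_le_one_left (abs_nonneg _) (Real.abs_cos_le_one _)
  · exact Eventually.of_forall fun v => by fun_prop

theorem ftEven_neg (f : ℝ → ℝ) (ξ : ℝ) : ftEven f (-ξ) = ftEven f ξ := by
  simp [ftEven, neg_mul, Real.cos_neg]

theorem ftEven_abs (f : ℝ → ℝ) (ξ : ℝ) : ftEven f |ξ| = ftEven f ξ := by
  rcases abs_choice ξ with h | h <;> rw [h]
  exact ftEven_neg f ξ

theorem abs_ftEven_le {f : ℝ → ℝ} (hf : Integrable f) (h0 : ∀ v, 0 ≤ f v) (ξ : ℝ) :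
    |ftEven f ξ| ≤ ftEven f 0 := by
  have h1 : ftEven f 0 = ∫ v, f v := by simp [ftEven]
  rw [h1, ftEven, ← Real.norm_eq_abs]
  refine norm_integral_le_of_norm_le hf (Eventually.of_forall fun v => ?_)
  rw [norm_mul, Real.norm_eq_abs, Real.norm_eq_abs, abs_of_nonneg (h0 v)]
  exact mul_le_of_le_one_left (h0 v) (Real.abs_cos_le_one _)

/-- Conservation of mass: the logistic-type equation `y' = 2β(y² - y)` has `y ≡ 1` as its only
solution starting from `1`. -/
theorem mass_eq_one {y : ℝ → ℝ} {β : ℝ} (h0 : y 0 = 1)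
    (hy : ∀ t ∈ Ici (0 : ℝ), HasDerivWithinAt y (2 * (β * (y t * y t - y t))) (Ici 0) t)
    {t : ℝ} (ht : 0 ≤ t) : y t = 1 := by
  have hc : ContinuousOn y (Icc 0 t) := fun s hs =>
    ((hy s hs.1).continuousWithinAt).mono Icc_subset_Ici_self
  obtain ⟨M, hM⟩ := isCompact_Icc.exists_bound_of_continuousOn hc
  have key := norm_le_gronwallBound_of_norm_deriv_right_le (f := fun s => y s - 1)
    (f' := fun s => 2 * (β * (y s * y s - y s))) (δ := 0) (K := 2 * |β| * M) (ε := 0)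
    (a := 0) (b := t) (hc.sub continuousOn_const)
    (fun s hs => ((hy s hs.1).mono (Ici_subset_Ici.2 hs.1)).sub_const 1) (by simp [h0])
    (fun s hs => by
      have h1 : 2 * (β * (y s * y s - y s)) = 2 * β * y s * (y s - 1) := by ring
      have h2 := hM s ⟨hs.1, hs.2.le⟩
      rw [h1, norm_mul, norm_mul, norm_mul, add_zero, Real.norm_eq_abs β, Real.norm_two]
      gcongr) t ⟨ht, le_rfl⟩
  have h3 : gronwallBound 0 (2 * |β| * M) 0 (t - 0) = 0 := by
    simp [gronwallBound_ε0]
  rw [h3] at key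
  have := norm_le_zero_iff.1 key
  linarith

/-! ### Stability of the Kac equation in the weighted metric -/

/-- The gain term of the collision operator is Lipschitz on functions bounded by `1`. -/
theorem abs_mul_sub_mul_le {a b c d : ℝ} (ha : |a| ≤ 1) (hd : |d| ≤ 1) :
    |a * b - c * d| ≤ |a - c| + |b - d| := by
  have h : a * b - c * d = a * (b - d) + (a - c) * d := by ring
  rw [h]
  refine (abs_add_le _ _).trans ?_
  rw [abs_mul, abs_mul]
  have h1 := mul_le_mul_of_nonneg_right ha (abs_nonneg (b - d))
  have h2 := mul_le_mul_of_nonneg_left hd (abs_nonneg (a - c))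
  linarith

theorem gain_continuous {q : ℝ} (hq : 0 < q) {g : ℝ → ℝ} (hg : Continuous g) (ξ : ℝ) :
    Continuous fun θ => g (ξ * Real.cos θ ^ q) * g (ξ * Real.sin θ ^ q) - g ξ := by
  have h1 : Continuous fun θ : ℝ => Real.cos θ ^ q :=
    Real.continuous_cos.rpow_const fun _ => Or.inr hq.le
  have h2 : Continuous fun θ : ℝ => Real.sin θ ^ q :=
    Real.continuous_sin.rpow_const fun _ => Or.inr hq.le
  fun_prop

/-- The weight `ξ ^ s` with `s q = 2` is exactly conserved by the collision rule, since
`cos² + sin² = 1`. -/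
theorem weight_split {q s ξ θ : ℝ} (hqs : q * s = 2) (hξ : 0 ≤ ξ) (hc : 0 ≤ Real.cos θ)
    (hs : 0 ≤ Real.sin θ) :
    (ξ * Real.cos θ ^ q) ^ s = ξ ^ s * Real.cos θ ^ 2 ∧
      (ξ * Real.sin θ ^ q) ^ s = ξ ^ s * Real.sin θ ^ 2 := by
  constructor
  · rw [Real.mul_rpow hξ (Real.rpow_nonneg hc _), ← Real.rpow_mul hc, hqs, Real.rpow_two]
  · rw [Real.mul_rpow hξ (Real.rpow_nonneg hs _), ← Real.rpow_mul hs, hqs, Real.rpow_two]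

theorem trig_facts {θ : ℝ} (hθ : θ ∈ Icc (0 : ℝ) (π / 2)) :
    0 ≤ Real.cos θ ∧ 0 ≤ Real.sin θ :=
  ⟨Real.cos_nonneg_of_mem_Icc ⟨by linarith [hθ.1, Real.pi_pos], hθ.2⟩,
    Real.sin_nonneg_of_mem_Icc ⟨hθ.1, by linarith [hθ.2, Real.pi_pos]⟩⟩

theorem mul_rpow_mem {q ξ L x : ℝ} (hq : 0 ≤ q) (hξ : ξ ∈ Icc (0 : ℝ) L) (h0 : 0 ≤ x)
    (h1 : x ≤ 1) : ξ * x ^ q ∈ Icc (0 : ℝ) L :=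
  ⟨mul_nonneg hξ.1 (Real.rpow_nonneg h0 _),
    (mul_le_of_le_one_right hξ.1 (Real.rpow_le_one h0 h1 hq)).trans hξ.2⟩

/-- Difference of two collision operators, under a bound by the conserved weight plus a
constant on the difference of the arguments. The conserved weight passes through with total
factor `β = ∫ b`, whereas the constant is doubled. -/
theorem collision_diff {q s L : ℝ} (hq : 0 < q) (hqs : q * s = 2) {b : ℝ → ℝ}
    (hb : IntervalIntegrable b volume 0 (π / 2)) (hb0 : ∀ θ, 0 ≤ b θ)
    {g F : ℝ → ℝ} (hg : Continuous g) (hF : Continuous F) (hg1 : ∀ x, |g x| ≤ 1)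
    (hF1 : ∀ x, |F x| ≤ 1) {A N : ℝ} (h : ∀ x ∈ Icc (0 : ℝ) L, |g x - F x| ≤ A * x ^ s + N)
    {ξ : ℝ} (hξ : ξ ∈ Icc (0 : ℝ) L) :
    |(∫ θ in (0 : ℝ)..(π / 2),
          b θ * (g (ξ * Real.cos θ ^ q) * g (ξ * Real.sin θ ^ q) - g ξ)) -
        (∫ θ in (0 : ℝ)..(π / 2),
          b θ * (F (ξ * Real.cos θ ^ q) * F (ξ * Real.sin θ ^ q) - F ξ)) +
        (∫ θ in (0 : ℝ)..(π / 2), b θ) * (g ξ - F ξ)| ≤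
      (∫ θ in (0 : ℝ)..(π / 2), b θ) * (A * ξ ^ s + 2 * N) := by
  have hi1 := hb.mul_continuousOn (gain_continuous hq hg ξ).continuousOn
  have hi2 := hb.mul_continuousOn (gain_continuous hq hF ξ).continuousOn
  have hi3 := hb.mul_const (g ξ - F ξ)
  rw [← intervalIntegral.integral_mul_const, ← intervalIntegral.integral_mul_const,
    ← intervalIntegral.integral_sub hi1 hi2, ← intervalIntegral.integral_add (hi1.sub hi2) hi3,
    ← Real.norm_eq_abs]
  refine intervalIntegral.norm_integral_le_of_norm_le (by positivity)
    (Eventually.of_forall fun θ hθ => ?_) (hb.mul_const _)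
  obtain ⟨hc, hs⟩ := trig_facts ⟨hθ.1.le, hθ.2⟩
  obtain ⟨w1, w2⟩ := weight_split hqs hξ.1 hc hs
  have e1 := h _ (mul_rpow_mem hq.le hξ hc (Real.cos_le_one θ))
  have e2 := h _ (mul_rpow_mem hq.le hξ hs (Real.sin_le_one θ))
  rw [w1] at e1
  rw [w2] at e2
  have e3 := abs_mul_sub_mul_le (b := g (ξ * Real.sin θ ^ q)) (c := F (ξ * Real.cos θ ^ q))
    (hg1 (ξ * Real.cos θ ^ q)) (hF1 (ξ * Real.sin θ ^ q))
  have e4 : A * (ξ ^ s * Real.cos θ ^ 2) + A * (ξ ^ s * Real.sin θ ^ 2) = A * ξ ^ s := by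
    rw [← mul_add, ← mul_add, Real.cos_sq_add_sin_sq, mul_one]
  rw [show ∀ x y z w u : ℝ, b θ * (x * y - z) - b θ * (w * u - F ξ) + b θ * (z - F ξ)
      = b θ * (x * y - w * u) from fun x y z w u => by ring, Real.norm_eq_abs, abs_mul,
    abs_of_nonneg (hb0 θ)]
  refine mul_le_mul_of_nonneg_left ?_ (hb0 θ)
  linarith

theorem nonneg_of_deriv_nonneg {v v' : ℝ → ℝ}
    (hv : ∀ t ∈ Ici (0 : ℝ), HasDerivWithinAt v (v' t) (Ici 0) t) (h0 : 0 ≤ v 0)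
    (hv' : ∀ t ∈ Ici (0 : ℝ), 0 ≤ v' t) {t : ℝ} (ht : 0 ≤ t) : 0 ≤ v t := by
  have hm : MonotoneOn v (Ici 0) := by
    refine monotoneOn_of_hasDerivWithinAt_nonneg (f' := v') (convex_Ici 0)
      (fun s hs => (hv s hs).continuousWithinAt) (fun s hs => ?_) (fun s hs => ?_)
    · exact (hv s (interior_subset hs)).mono interior_subset
    · exact hv' s (interior_subset hs)
  exact h0.trans (hm (mem_Ici.2 le_rfl) ht ht)

/-- One-sided comparison with the supersolution `r x (1 - e^{-2t}) / 2 + N e^{6βt}`, through the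
integrating factor `e^{2βt}`. The rate `6β` makes the constant drop from `N` to `N / 2`. -/
theorem one_sided {β r N x : ℝ} (hN : 0 ≤ N) {u u' : ℝ → ℝ} (h0 : u 0 = 0)
    (hu : ∀ t ∈ Ici (0 : ℝ), HasDerivWithinAt u (u' t) (Ici 0) t)
    (hu' : ∀ t ∈ Ici (0 : ℝ), u' t + 2 * β * u t ≤
      2 * (β * (r * (1 - Real.exp (-2 * t)) / 2 * x + 2 * (N * Real.exp (6 * β * t)))) +
        r * x * Real.exp (-2 * t)) {t : ℝ} (ht : 0 ≤ t) :
    u t ≤ r * (1 - Real.exp (-2 * t)) / 2 * x + N / 2 * Real.exp (6 * β * t) := by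
  have key := nonneg_of_deriv_nonneg
    (v := fun t => Real.exp (2 * β * t) *
      (r * (1 - Real.exp (-2 * t)) / 2 * x + N / 2 * Real.exp (6 * β * t) - u t))
    (v' := fun t => Real.exp (2 * β * t) * (2 * β) *
      (r * (1 - Real.exp (-2 * t)) / 2 * x + N / 2 * Real.exp (6 * β * t) - u t) +
      Real.exp (2 * β * t) * (r * Real.exp (-2 * t) * x +
        N / 2 * (Real.exp (6 * β * t) * (6 * β)) - u' t)) ?_ ?_ ?_ ht
  · have := nonneg_of_mul_nonneg_right key (Real.exp_pos _)
    linarith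
  · intro t ht
    have hexp : ∀ k : ℝ, HasDerivWithinAt (fun t : ℝ => Real.exp (k * t))
        (Real.exp (k * t) * k) (Ici 0) t := fun k => by
      have := ((hasDerivAt_id t).const_mul k).exp
      simpa using this.hasDerivWithinAt
    refine (hexp (2 * β)).mul ((HasDerivWithinAt.add ?_ ((hexp (6 * β)).const_mul _)).sub
      (hu t ht))
    have h1 := ((((hexp (-2)).const_sub 1).const_mul r).div_const 2).mul_const x
    exact h1.congr_deriv (by ring)
  · simp only [mul_zero, Real.exp_zero, h0]
    linarith
  · intro t ht
    have := hu' t ht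
    have h2 : 0 ≤ Real.exp (2 * β * t) * (2 * (β * (r * (1 - Real.exp (-2 * t)) / 2 * x +
      2 * (N * Real.exp (6 * β * t)))) +
        r * x * Real.exp (-2 * t) - (u' t + 2 * β * u t)) :=
      mul_nonneg (Real.exp_pos _).le (by linarith)
    refine h2.trans (le_of_eq ?_)
    ring

/-- Stability of the Kac equation in the weighted Fourier metric. The function `F` solves the
equation up to a residual at most `r ξ^s e^{-2t}`. Boundedness of `g` and `F` replaces any a priori
control of `(g - F) / ξ^s`: the crude bound is improved by a factor `2` indefinitely. -/
theorem kac_stability {q s L r : ℝ} (hq : 0 < q) (hqs : q * s = 2) (hr : 0 ≤ r) {b : ℝ → ℝ}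
    (hb : IntervalIntegrable b volume 0 (π / 2)) (hb0 : ∀ θ, 0 ≤ b θ)
    {g F F' : ℝ → ℝ → ℝ} (hg : ∀ t ∈ Ici (0 : ℝ), Continuous (g t))
    (hF : ∀ t ∈ Ici (0 : ℝ), Continuous (F t))
    (hg1 : ∀ t ∈ Ici (0 : ℝ), ∀ x, |g t x| ≤ 1) (hF1 : ∀ t ∈ Ici (0 : ℝ), ∀ x, |F t x| ≤ 1)
    (hz : ∀ t ∈ Ici (0 : ℝ), g t 0 = F t 0) (hi : ∀ x, g 0 x = F 0 x)
    (hgd : ∀ ξ ∈ Ioc (0 : ℝ) L, ∀ t ∈ Ici (0 : ℝ), HasDerivWithinAt (fun t => g t ξ)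
      (2 * ∫ θ in (0 : ℝ)..(π / 2),
          b θ * (g t (ξ * Real.cos θ ^ q) * g t (ξ * Real.sin θ ^ q) - g t ξ)) (Ici 0) t)
    (hFd : ∀ ξ ∈ Ioc (0 : ℝ) L, ∀ t ∈ Ici (0 : ℝ),
      HasDerivWithinAt (fun t => F t ξ) (F' t ξ) (Ici 0) t)
    (hres : ∀ ξ ∈ Ioc (0 : ℝ) L, ∀ t ∈ Ici (0 : ℝ), |F' t ξ - 2 * ∫ θ in (0 : ℝ)..(π / 2),
          b θ * (F t (ξ * Real.cos θ ^ q) * F t (ξ * Real.sin θ ^ q) - F t ξ)| ≤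
        r * ξ ^ s * Real.exp (-2 * t))
    {ξ : ℝ} (hξ : ξ ∈ Icc (0 : ℝ) L) {t : ℝ} (ht : 0 ≤ t) :
    |g t ξ - F t ξ| ≤ r * (1 - Real.exp (-2 * t)) / 2 * ξ ^ s := by
  set β := ∫ θ in (0 : ℝ)..(π / 2), b θ with hβ
  have hβ0 : 0 ≤ β := intervalIntegral.integral_nonneg (by positivity) fun θ _ => hb0 θ
  have hone : ∀ t ∈ Ici (0 : ℝ), 0 ≤ r * (1 - Real.exp (-2 * t)) / 2 := fun t ht => by
    have : Real.exp (-2 * t) ≤ 1 := Real.exp_le_one_iff.2 (by linarith [mem_Ici.1 ht])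
    have := mul_nonneg hr (sub_nonneg.2 this)
    linarith
  have hstep : ∀ n : ℕ, ∀ ξ ∈ Icc (0 : ℝ) L, ∀ t ∈ Ici (0 : ℝ), |g t ξ - F t ξ| ≤
      r * (1 - Real.exp (-2 * t)) / 2 * ξ ^ s + 2 * (1 / 2) ^ n * Real.exp (6 * β * t) := by
    intro n
    induction n with
    | zero =>
      intro ξ hξ t ht
      have h1 := (abs_sub _ _).trans (add_le_add (hg1 t ht ξ) (hF1 t ht ξ))
      have h2 := mul_nonneg (hone t ht) (Real.rpow_nonneg hξ.1 s)
      have h3 : 1 ≤ Real.exp (6 * β * t) :=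
        Real.one_le_exp (mul_nonneg (by linarith) ht)
      simp only [pow_zero, mul_one]
      linarith
    | succ n ih =>
      intro ξ hξ t ht
      rcases hξ.1.eq_or_lt with h0 | h0
      · rw [← h0, hz t ht, sub_self, abs_zero]
        exact add_nonneg (mul_nonneg (hone t ht) (Real.rpow_nonneg le_rfl s)) (by positivity)
      have hξ' : ξ ∈ Ioc (0 : ℝ) L := ⟨h0, hξ.2⟩
      have hN : (0 : ℝ) ≤ 2 * (1 / 2) ^ n := by positivity
      have hNe : (2 : ℝ) * (1 / 2) ^ (n + 1) = 2 * (1 / 2) ^ n / 2 := by ring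
      rw [hNe]
      have hcd := fun t ht => abs_le.1 (collision_diff hq hqs hb hb0 (hg t ht) (hF t ht)
        (hg1 t ht) (hF1 t ht) (fun x hx => ih x hx t ht) hξ)
      have hrs := fun t ht => abs_le.1 (hres ξ hξ' t ht)
      refine abs_le'.2 ⟨?_, ?_⟩
      · refine one_sided (u := fun t => g t ξ - F t ξ) hN (by simp [hi])
          (fun t ht => (hgd ξ hξ' t ht).sub (hFd ξ hξ' t ht)) (fun t ht => ?_) ht
        have e1 := (hcd t ht).2
        have e2 := (hrs t ht).1
        simp only [← hβ] at e1
        linarith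
      · refine one_sided (u := fun t => -(g t ξ - F t ξ)) hN (by simp [hi])
          (fun t ht => ((hgd ξ hξ' t ht).sub (hFd ξ hξ' t ht)).neg) (fun t ht => ?_) ht
        have e1 := (hcd t ht).1
        have e2 := (hrs t ht).2
        simp only [← hβ] at e1
        linarith
  have hlim : Tendsto (fun n : ℕ => r * (1 - Real.exp (-2 * t)) / 2 * ξ ^ s +
      2 * (1 / 2) ^ n * Real.exp (6 * β * t)) atTop
      (𝓝 (r * (1 - Real.exp (-2 * t)) / 2 * ξ ^ s + 2 * 0 * Real.exp (6 * β * t))) :=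
    (((tendsto_pow_atTop_nhds_zero_of_lt_one (by norm_num) (by norm_num)).const_mul
      2).mul_const _).const_add _
  have := ge_of_tendsto' hlim fun n => hstep n ξ hξ t ht
  simpa using this

/-! ### Expansion of the collision operator at the initial datum -/

/-- The derivative of `φ` with respect to the variable `x ^ s`. -/
def wderiv (s : ℝ) (φ : ℝ → ℝ) (x : ℝ) : ℝ := deriv φ x / x ^ (s - 1) / s

/-- Cauchy's mean value theorem for `φ` against `x ^ s`. -/
theorem exists_wderiv {s : ℝ} (hs : 0 < s) {φ : ℝ → ℝ}
    (hd : ∀ x > (0 : ℝ), DifferentiableAt ℝ φ x) {x y : ℝ} (hy : 0 < y) (hyx : y < x) :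
    ∃ z ∈ Ioo y x, φ x - φ y = wderiv s φ z * (x ^ s - y ^ s) := by
  have hp : ∀ z ∈ Icc y x, 0 < z := fun z hz => hy.trans_le hz.1
  obtain ⟨z, hz, h⟩ := exists_ratio_hasDerivAt_eq_ratio_slope φ (deriv φ) hyx
    (fun z hz => (hd z (hp z hz)).continuousAt.continuousWithinAt)
    (fun z hz => (hd z (hp z (Ioo_subset_Icc_self hz))).hasDerivAt)
    (fun z => z ^ s) (fun z => s * z ^ (s - 1))
    (fun z hz => (Real.continuousAt_rpow_const z s (Or.inl (hp z hz).ne')).continuousWithinAt)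
    (fun z hz => Real.hasDerivAt_rpow_const (Or.inl (hp z (Ioo_subset_Icc_self hz)).ne'))
  refine ⟨z, hz, ?_⟩
  have hz0 : 0 < z := hy.trans hz.1
  have h1 : 0 < z ^ (s - 1) := Real.rpow_pos_of_pos hz0 _
  unfold wderiv
  field_simp
  linarith

/-- First-order expansion in the variable `x ^ s` with Hölder remainder. -/
theorem wderiv_expansion {s k δ L : ℝ} (hs : 0 < s) (hδ : 0 < δ) (hk : 0 ≤ k) {φ : ℝ → ℝ}
    (hd : ∀ x > (0 : ℝ), DifferentiableAt ℝ φ x)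
    (hH : ∀ x ∈ Ioc (0 : ℝ) L, ∀ y ∈ Ioc (0 : ℝ) L,
      |wderiv s φ x - wderiv s φ y| ≤ k * |x - y| ^ δ)
    {x y : ℝ} (hy : 0 < y) (hyx : y < x) (hx : x ≤ L) :
    |φ x - φ y - wderiv s φ x * (x ^ s - y ^ s)| ≤ k * (x - y) ^ δ * (x ^ s - y ^ s) := by
  obtain ⟨z, hz, h⟩ := exists_wderiv hs hd hy hyx
  have h0 : 0 ≤ x ^ s - y ^ s := sub_nonneg.2 (Real.rpow_le_rpow hy.le hyx.le hs.le)
  rw [h, ← sub_mul, abs_mul, abs_of_nonneg h0]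
  refine mul_le_mul_of_nonneg_right ?_ h0
  refine (hH z ⟨hy.trans hz.1, hz.2.le.trans hx⟩ x ⟨hy.trans hyx, hx⟩).trans ?_
  refine mul_le_mul_of_nonneg_left (Real.rpow_le_rpow (abs_nonneg _) ?_ hδ.le) hk
  rw [abs_of_nonpos (by linarith [hz.2])]
  linarith [hz.1]

/-- Letting `y → 0` in the expansion: the behaviour `φ = 1 - α x ^ s + o(x ^ s)` at the origin
identifies the boundary value of `wderiv s φ` as `-α`, with Hölder rates. -/
theorem origin_expansion {s k δ L α : ℝ} (hs : 0 < s) (hδ : 0 < δ) (hk : 0 ≤ k) {φ : ℝ → ℝ}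
    (hd : ∀ x > (0 : ℝ), DifferentiableAt ℝ φ x) (hc : Continuous φ) (h1 : φ 0 = 1)
    (hA : Tendsto (fun x => (1 - φ x) / x ^ s) (𝓝[>] 0) (𝓝 α))
    (hH : ∀ x ∈ Ioc (0 : ℝ) L, ∀ y ∈ Ioc (0 : ℝ) L,
      |wderiv s φ x - wderiv s φ y| ≤ k * |x - y| ^ δ)
    {x : ℝ} (hx : x ∈ Ioc (0 : ℝ) L) :
    |wderiv s φ x + α| ≤ k * x ^ δ ∧ |φ x - 1 + α * x ^ s| ≤ 2 * k * x ^ δ * x ^ s := by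
  have hid : Tendsto (fun y : ℝ => y) (𝓝[>] 0) (𝓝 0) := tendsto_id.mono_left nhdsWithin_le_nhds
  have hpow : ∀ a : ℝ, 0 < a → Tendsto (fun y : ℝ => y ^ a) (𝓝[>] 0) (𝓝 0) := fun a ha => by
    have := hid.rpow_const (p := a) (Or.inr ha.le)
    rwa [Real.zero_rpow ha.ne'] at this
  have hφ : Tendsto φ (𝓝[>] 0) (𝓝 1) := by
    have := (hc.tendsto 0).comp hid
    rwa [h1] at this
  have hev : ∀ x : ℝ, 0 < x → ∀ᶠ y in 𝓝[>] (0 : ℝ), y ∈ Ioo 0 x := fun x hx =>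
    Ioo_mem_nhdsGT hx
  have step1 : ∀ x ∈ Ioc (0 : ℝ) L,
      |φ x - 1 - wderiv s φ x * x ^ s| ≤ k * x ^ δ * x ^ s := by
    intro x hx
    have hl : Tendsto (fun y => |φ x - φ y - wderiv s φ x * (x ^ s - y ^ s)|) (𝓝[>] 0)
        (𝓝 |φ x - 1 - wderiv s φ x * (x ^ s - 0)|) :=
      ((hφ.const_sub _).sub (((hpow s hs).const_sub _).const_mul _)).abs
    have hr : Tendsto (fun y => k * (x - y) ^ δ * (x ^ s - y ^ s)) (𝓝[>] 0)
        (𝓝 (k * (x - 0) ^ δ * (x ^ s - 0))) :=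
      (((hid.const_sub x).rpow_const (Or.inr hδ.le)).const_mul k).mul
        ((hpow s hs).const_sub _)
    have := le_of_tendsto_of_tendsto hl hr ((hev x hx.1).mono fun y hy =>
      wderiv_expansion hs hδ hk hd hH hy.1 hy.2 hx.2)
    simpa using this
  have hw : Tendsto (wderiv s φ) (𝓝[>] 0) (𝓝 (-α)) := by
    have hz : Tendsto (fun y => wderiv s φ y + (1 - φ y) / y ^ s) (𝓝[>] 0) (𝓝 0) := by
      refine squeeze_zero_norm' (a := fun y => k * y ^ δ) ?_ (by simpa using (hpow δ hδ).const_mul k)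
      filter_upwards [hev L (hx.1.trans_le hx.2)] with y hy
      have hp : 0 < y ^ s := Real.rpow_pos_of_pos hy.1 _
      have e := step1 y ⟨hy.1, hy.2.le⟩
      have e2 : wderiv s φ y + (1 - φ y) / y ^ s
          = -((φ y - 1 - wderiv s φ y * y ^ s) / y ^ s) := by field_simp; ring
      rw [e2, norm_neg, Real.norm_eq_abs, abs_div, abs_of_pos hp]
      exact (div_le_iff₀ hp).2 e
    have := hz.sub hA
    simpa using this
  have step2 : |wderiv s φ x + α| ≤ k * x ^ δ := by
    have hl : Tendsto (fun y => |wderiv s φ x - wderiv s φ y|) (𝓝[>] 0)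
        (𝓝 |wderiv s φ x - -α|) := (hw.const_sub _).abs
    rw [sub_neg_eq_add] at hl
    refine le_of_tendsto hl ((hev x hx.1).mono fun y hy => ?_)
    refine (hH x hx y ⟨hy.1, hy.2.le.trans hx.2⟩).trans ?_
    refine mul_le_mul_of_nonneg_left (Real.rpow_le_rpow (abs_nonneg _) ?_ hδ.le) hk
    rw [abs_of_pos (by linarith [hy.2])]
    linarith [hy.1]
  refine ⟨step2, ?_⟩
  have hp : 0 < x ^ s := Real.rpow_pos_of_pos hx.1 _
  have e1 : φ x - 1 + α * x ^ s
      = (φ x - 1 - wderiv s φ x * x ^ s) + (wderiv s φ x + α) * x ^ s := by ring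
  rw [e1]
  refine (abs_add_le _ _).trans ?_
  rw [abs_mul, abs_of_pos hp]
  have := mul_le_mul_of_nonneg_right step2 hp.le
  have := step1 x hx
  linarith

/-- Pointwise grazing expansion of the collision integrand: the second-order part in `sin θ` is
the Fokker–Planck operator (written with `wderiv`), and the remainder carries an extra `sin ^ δ`.
By Cauchy's mean value theorem the increment `φ (x cos ^ q θ) - φ x` is
`-wderiv s φ x * x ^ s * sin ^ 2 θ` to leading order, because `(x cos ^ q θ) ^ s = x ^ s cos ^ 2 θ`.
-/
theorem integrand_expansion {q s k δ L α : ℝ} (hq1 : 1 ≤ q) (hq2 : q ≤ 2) (hqs : q * s = 2)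
    (hδ : 0 < δ) (hδ1 : δ < 1) (hk : 0 ≤ k) (hα : 0 ≤ α) {φ : ℝ → ℝ}
    (hd : ∀ x > (0 : ℝ), DifferentiableAt ℝ φ x) (hc : Continuous φ) (h1 : φ 0 = 1)
    (hφ1 : ∀ x, |φ x| ≤ 1)
    (hA : Tendsto (fun x => (1 - φ x) / x ^ s) (𝓝[>] 0) (𝓝 α))
    (hH : ∀ x ∈ Ioc (0 : ℝ) L, ∀ y ∈ Ioc (0 : ℝ) L,
      |wderiv s φ x - wderiv s φ y| ≤ k * |x - y| ^ δ)
    {x : ℝ} (hx : x ∈ Ioc (0 : ℝ) L) {θ : ℝ} (hθ : θ ∈ Ioo (0 : ℝ) (π / 2)) :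
    |φ (x * Real.cos θ ^ q) * φ (x * Real.sin θ ^ q) - φ x +
        (α * φ x + wderiv s φ x) * x ^ s * Real.sin θ ^ 2| ≤
      (3 * k * L ^ δ + (α + 2 * k * L ^ δ) ^ 2 * L ^ s) * x ^ s *
        (Real.sin θ ^ 2 * Real.sin θ ^ δ) := by
  have hs : 0 < s := by nlinarith
  have hL : 0 < L := hx.1.trans_le hx.2
  have hC : 0 < Real.cos θ := Real.cos_pos_of_mem_Ioo ⟨by linarith [hθ.1, Real.pi_pos], hθ.2⟩
  have hS : 0 < Real.sin θ := Real.sin_pos_of_mem_Ioo ⟨hθ.1, by linarith [hθ.2, Real.pi_pos]⟩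
  obtain ⟨w1, w2⟩ := weight_split hqs hx.1.le hC.le hS.le
  have hsc := Real.sin_sq_add_cos_sq θ
  set S := Real.sin θ with hSdef
  set C := Real.cos θ with hCdef
  have hS1 : S ≤ 1 := Real.sin_le_one θ
  have hC1 : C < 1 := by nlinarith
  set X := x ^ s with hX
  have hX0 : 0 < X := Real.rpow_pos_of_pos hx.1 _
  have hXL : X ≤ L ^ s := Real.rpow_le_rpow hx.1.le hx.2 hs.le
  set Λ := L ^ δ with hΛ
  have hΛ0 : 0 < Λ := Real.rpow_pos_of_pos hL _
  set σ := S ^ δ with hσ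
  have hσ0 : 0 < σ := Real.rpow_pos_of_pos hS _
  have hσ1 : σ ≤ 1 := Real.rpow_le_one hS.le hS1 hδ.le
  have hS2σ : S ^ 2 ≤ σ := by
    rw [← Real.rpow_two]
    exact Real.rpow_le_rpow_of_exponent_ge hS hS1 (by linarith)
  -- `1 - C ^ q ≤ 1 - C ^ 2 = S ^ 2 ≤ S`, as `q ≤ 2`: the increment at `x C ^ q` is of order `S ^ 2`
  have hCq0 : 0 < C ^ q := Real.rpow_pos_of_pos hC _
  have hCq1 : C ^ q < 1 := Real.rpow_lt_one hC.le hC1 (by linarith)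
  have hCq2 : C ^ 2 ≤ C ^ q := by
    rw [← Real.rpow_two]
    exact Real.rpow_le_rpow_of_exponent_ge hC hC1.le hq2
  have hxC : x * C ^ q < x := mul_lt_of_lt_one_right hx.1 hCq1
  have a1 := wderiv_expansion hs hδ hk hd hH (mul_pos hx.1 hCq0) hxC hx.2
  have hgap : (x - x * C ^ q) ^ δ ≤ Λ * σ := by
    rw [hΛ, hσ, ← Real.mul_rpow hL.le hS.le]
    refine Real.rpow_le_rpow (by linarith) ?_ hδ.le
    have h2 : 1 - C ^ q ≤ S := by nlinarith
    calc x - x * C ^ q = x * (1 - C ^ q) := by ring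
      _ ≤ L * S := mul_le_mul hx.2 h2 (by linarith) hL.le
  have hXS : X - X * C ^ 2 = X * S ^ 2 := by
    linear_combination X * hsc.symm
  rw [w1, ← hX, hXS] at a1
  have a2 : |φ (x * C ^ q) - φ x + wderiv s φ x * (X * S ^ 2)| ≤ k * (Λ * σ) * (X * S ^ 2) := by
    rw [← abs_neg, show -(φ (x * C ^ q) - φ x + wderiv s φ x * (X * S ^ 2))
      = φ x - φ (x * C ^ q) - wderiv s φ x * (X * S ^ 2) by ring]
    refine a1.trans ?_
    gcongr
  -- `S ^ q ≤ S`, as `1 ≤ q`: the argument `x S ^ q` lies near the origin, where `φ ≈ 1 - α x ^ s`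
  have hSq0 : 0 < S ^ q := Real.rpow_pos_of_pos hS _
  have hSqS : S ^ q ≤ S := by
    have := Real.rpow_le_rpow_of_exponent_ge hS hS1 hq1
    rwa [Real.rpow_one] at this
  have hxS : x * S ^ q ∈ Ioc (0 : ℝ) L := ⟨mul_pos hx.1 hSq0,
    (mul_le_of_le_one_right hx.1.le (hSqS.trans hS1)).trans hx.2⟩
  have hxSδ : (x * S ^ q) ^ δ ≤ Λ * σ := by
    rw [hΛ, hσ, ← Real.mul_rpow hL.le hS.le]
    exact Real.rpow_le_rpow hxS.1.le (mul_le_mul hx.2 hSqS hSq0.le hL.le) hδ.le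
  have a3 := (origin_expansion hs hδ hk hd hc h1 hA hH hxS).2
  rw [w2] at a3
  have a4 : |φ (x * S ^ q) - 1 + α * (X * S ^ 2)| ≤ 2 * k * (Λ * σ) * (X * S ^ 2) := by
    refine a3.trans ?_
    gcongr
  have a5 : |wderiv s φ x| ≤ α + k * Λ := by
    have h2 := (origin_expansion hs hδ hk hd hc h1 hA hH hx).1
    have h3 : k * x ^ δ ≤ k * Λ :=
      mul_le_mul_of_nonneg_left (Real.rpow_le_rpow hx.1.le hx.2 hδ.le) hk
    have h4 := abs_le.1 (h2.trans h3)
    exact abs_le.2 ⟨by linarith [h4.1], by linarith [h4.2]⟩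
  have hQ : 0 < X * S ^ 2 := by positivity
  have hσΛ : k * (Λ * σ) ≤ k * Λ := by
    refine mul_le_mul_of_nonneg_left ?_ hk
    exact mul_le_of_le_one_right hΛ0.le hσ1
  have a6 : |φ (x * C ^ q) - φ x| ≤ (α + 2 * k * Λ) * (X * S ^ 2) := by
    have h2 : φ (x * C ^ q) - φ x = (φ (x * C ^ q) - φ x + wderiv s φ x * (X * S ^ 2)) -
      wderiv s φ x * (X * S ^ 2) := by ring
    rw [h2]
    refine (abs_sub _ _).trans ?_
    rw [abs_mul _ (X * S ^ 2), abs_of_pos hQ]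
    have h3 := mul_le_mul_of_nonneg_right a5 hQ.le
    have h4 := mul_le_mul_of_nonneg_right hσΛ hQ.le
    linarith
  have a7 : |φ (x * S ^ q) - 1| ≤ (α + 2 * k * Λ) * (L ^ s * σ) := by
    have h2 : φ (x * S ^ q) - 1 = (φ (x * S ^ q) - 1 + α * (X * S ^ 2)) - α * (X * S ^ 2) := by
      ring
    have h3 : |φ (x * S ^ q) - 1| ≤ (α + 2 * k * Λ) * (X * S ^ 2) := by
      rw [h2]
      refine (abs_sub _ _).trans ?_
      rw [abs_mul _ (X * S ^ 2), abs_of_pos hQ, abs_of_nonneg hα]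
      have h4 := mul_le_mul_of_nonneg_right hσΛ hQ.le
      linarith
    refine h3.trans ?_
    gcongr
  have hsplit : φ (x * C ^ q) * φ (x * S ^ q) - φ x + (α * φ x + wderiv s φ x) * X * S ^ 2
      = φ x * (φ (x * S ^ q) - 1 + α * (X * S ^ 2)) +
        (φ (x * C ^ q) - φ x + wderiv s φ x * (X * S ^ 2)) +
        (φ (x * C ^ q) - φ x) * (φ (x * S ^ q) - 1) := by ring
  rw [hsplit]
  refine (abs_add_three _ _ _).trans ?_
  rw [abs_mul, abs_mul]
  have b1 := mul_le_mul (hφ1 x) a4 (abs_nonneg _) zero_le_one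
  have b2 := mul_le_mul a6 a7 (abs_nonneg _) (by positivity)
  refine (add_le_add (add_le_add b1 a2) b2).trans (le_of_eq ?_)
  ring

/-- Residual of the initial datum: the difference between the Kac and the Fokker–Planck operators
at `φ`, when the collision kernel is supported in `θ ≤ d < 1`. -/
theorem residual_bound {q s k δ L α d : ℝ} (hq1 : 1 ≤ q) (hq2 : q ≤ 2) (hqs : q * s = 2)
    (hδ : 0 < δ) (hδ1 : δ < 1) (hk : 0 ≤ k) (hα : 0 ≤ α) {φ : ℝ → ℝ}
    (hd : ∀ x > (0 : ℝ), DifferentiableAt ℝ φ x) (hc : Continuous φ) (h1 : φ 0 = 1)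
    (hφ1 : ∀ x, |φ x| ≤ 1)
    (hA : Tendsto (fun x => (1 - φ x) / x ^ s) (𝓝[>] 0) (𝓝 α))
    (hH : ∀ x ∈ Ioc (0 : ℝ) L, ∀ y ∈ Ioc (0 : ℝ) L,
      |wderiv s φ x - wderiv s φ y| ≤ k * |x - y| ^ δ)
    {b : ℝ → ℝ} (hb : IntervalIntegrable b volume 0 (π / 2)) (hb0 : ∀ θ, 0 ≤ b θ)
    (hsupp : ∀ θ > 0, b θ ≠ 0 → θ ≤ |d|) (hd1 : |d| < 1)
    (hnorm : ∫ θ in (0 : ℝ)..(π / 2), b θ * Real.sin θ ^ 2 = 1)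
    {x : ℝ} (hx : x ∈ Ioc (0 : ℝ) L) :
    |(∫ θ in (0 : ℝ)..(π / 2),
        b θ * (φ (x * Real.cos θ ^ q) * φ (x * Real.sin θ ^ q) - φ x)) +
        (α * φ x + wderiv s φ x) * x ^ s| ≤
      (3 * k * L ^ δ + (α + 2 * k * L ^ δ) ^ 2 * L ^ s) * |d| ^ δ * x ^ s := by
  have hL : 0 < L := hx.1.trans_le hx.2
  set M := 3 * k * L ^ δ + (α + 2 * k * L ^ δ) ^ 2 * L ^ s with hM
  have hM0 : 0 ≤ M := by
    have := Real.rpow_nonneg hL.le δ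
    have := Real.rpow_nonneg hL.le s
    positivity
  have hX0 : 0 ≤ x ^ s := Real.rpow_nonneg hx.1.le _
  have hi1 := hb.mul_continuousOn (gain_continuous (by linarith : 0 < q) hc x).continuousOn
  have hi2 : IntervalIntegrable (fun θ => b θ * Real.sin θ ^ 2) volume 0 (π / 2) :=
    hb.mul_continuousOn (Real.continuous_sin.pow 2).continuousOn
  have e1 : (α * φ x + wderiv s φ x) * x ^ s =
      ∫ θ in (0 : ℝ)..(π / 2), b θ * Real.sin θ ^ 2 * ((α * φ x + wderiv s φ x) * x ^ s) := by
    rw [intervalIntegral.integral_mul_const, hnorm, one_mul]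
  have e2 : M * |d| ^ δ * x ^ s =
      ∫ θ in (0 : ℝ)..(π / 2), b θ * Real.sin θ ^ 2 * (M * |d| ^ δ * x ^ s) := by
    rw [intervalIntegral.integral_mul_const, hnorm, one_mul]
  rw [e1, e2, ← intervalIntegral.integral_add hi1 (hi2.mul_const _), ← Real.norm_eq_abs]
  refine intervalIntegral.norm_integral_le_of_norm_le (by positivity)
    (Eventually.of_forall fun θ hθ => ?_) (hi2.mul_const _)
  by_cases hbθ : b θ = 0
  · simp [hbθ]
  have hθd := hsupp θ hθ.1 hbθ
  have hθ' : θ ∈ Ioo (0 : ℝ) (π / 2) := ⟨hθ.1, by linarith [Real.pi_gt_three]⟩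
  have key := integrand_expansion hq1 hq2 hqs hδ hδ1 hk hα hd hc h1 hφ1 hA hH hx hθ'
  rw [← hM] at key
  have hS : 0 ≤ Real.sin θ := (trig_facts ⟨hθ.1.le, hθ.2⟩).2
  have hSd : Real.sin θ ^ δ ≤ |d| ^ δ :=
    Real.rpow_le_rpow hS ((Real.sin_le hθ.1.le).trans hθd) hδ.le
  rw [show ∀ y z : ℝ, b θ * y + b θ * Real.sin θ ^ 2 * (z * x ^ s)
      = b θ * (y + z * x ^ s * Real.sin θ ^ 2) from fun y z => by ring,
    Real.norm_eq_abs, abs_mul, abs_of_nonneg (hb0 θ),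
    mul_assoc (b θ)]
  refine mul_le_mul_of_nonneg_left (key.trans ?_) (hb0 θ)
  calc M * x ^ s * (Real.sin θ ^ 2 * Real.sin θ ^ δ)
      ≤ M * x ^ s * (Real.sin θ ^ 2 * |d| ^ δ) := by gcongr
    _ = Real.sin θ ^ 2 * (M * |d| ^ δ * x ^ s) := by ring

/-! ### The Fokker–Planck solution -/

/-- The Fokker–Planck solution with initial datum `φ`, in Fourier variables. -/
def fpSol (p α s : ℝ) (φ : ℝ → ℝ) (t ξ : ℝ) : ℝ :=
  φ (ξ * Real.exp (-(p + 1) * t)) * Real.exp (-α * |ξ| ^ s * (1 - Real.exp (-2 * t)))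

theorem fpSol_exponent_nonpos {α s : ℝ} (hα : 0 ≤ α) (ξ : ℝ) {t : ℝ} (ht : 0 ≤ t) :
    -α * |ξ| ^ s * (1 - Real.exp (-2 * t)) ≤ 0 := by
  have h1 : Real.exp (-2 * t) ≤ 1 := Real.exp_le_one_iff.2 (by linarith)
  have h2 : 0 ≤ |ξ| ^ s := Real.rpow_nonneg (abs_nonneg _) _
  have := mul_nonneg (mul_nonneg hα h2) (sub_nonneg.2 h1)
  linarith

theorem rescaled_weight {p s ξ t : ℝ} (hqs : (p + 1) * s = 2) (hξ : 0 ≤ ξ) :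
    (ξ * Real.exp (-(p + 1) * t)) ^ s = ξ ^ s * Real.exp (-2 * t) := by
  rw [Real.mul_rpow hξ (Real.exp_pos _).le, ← Real.exp_mul]
  congr 2
  linear_combination -t * hqs

theorem fpSol_hasDeriv {p α s : ℝ} (hs : 0 < s) (hqs : (p + 1) * s = 2) {φ : ℝ → ℝ}
    (hd : ∀ x > (0 : ℝ), DifferentiableAt ℝ φ x) {ξ : ℝ} (hξ : 0 < ξ) (t : ℝ) :
    HasDerivAt (fun t => fpSol p α s φ t ξ)
      (-2 * Real.exp (-α * |ξ| ^ s * (1 - Real.exp (-2 * t))) *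
        ((α * φ (ξ * Real.exp (-(p + 1) * t)) + wderiv s φ (ξ * Real.exp (-(p + 1) * t))) *
          (ξ * Real.exp (-(p + 1) * t)) ^ s)) t := by
  have hexp : ∀ k : ℝ, HasDerivAt (fun t : ℝ => Real.exp (k * t)) (Real.exp (k * t) * k) t :=
    fun k => by simpa using ((hasDerivAt_id t).const_mul k).exp
  set η := ξ * Real.exp (-(p + 1) * t) with hη
  have hη0 : 0 < η := mul_pos hξ (Real.exp_pos _)
  have h1 : HasDerivAt (fun t => φ (ξ * Real.exp (-(p + 1) * t)))
      (deriv φ η * (ξ * (Real.exp (-(p + 1) * t) * (-(p + 1))))) t :=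
    HasDerivAt.comp t (hd η hη0).hasDerivAt ((hexp (-(p + 1))).const_mul ξ)
  have h2 := (((hexp (-2)).const_sub 1).const_mul (-α * |ξ| ^ s)).exp
  refine (h1.mul h2).congr_deriv ?_
  have e1 : deriv φ η * η = s * wderiv s φ η * η ^ s := by
    have hp : 0 < η ^ (s - 1) := Real.rpow_pos_of_pos hη0 _
    have e2 : η ^ s = η ^ (s - 1) * η := by
      rw [← Real.rpow_add_one hη0.ne', sub_add_cancel]
    rw [e2]
    unfold wderiv
    field_simp
  have e3 : η ^ s = |ξ| ^ s * Real.exp (-2 * t) := by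
    rw [abs_of_pos hξ, hη, rescaled_weight hqs hξ.le]
  have e4 : deriv φ η * (ξ * (Real.exp (-(p + 1) * t) * (-(p + 1)))) =
      -2 * wderiv s φ η * η ^ s := by
    calc deriv φ η * (ξ * (Real.exp (-(p + 1) * t) * (-(p + 1))))
        = -(p + 1) * (deriv φ η * η) := by rw [hη]; ring
      _ = -((p + 1) * s) * wderiv s φ η * η ^ s := by rw [e1]; ring
      _ = _ := by rw [hqs]
  rw [e4, e3]
  ring

/-- The stretched exponential factor is multiplicative under collisions, so the gain term of the
Fokker–Planck solution at time `t` is that of the initial datum at a rescaled frequency. -/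
theorem fpSol_gain {p α s : ℝ} (hqs : (p + 1) * s = 2) (φ : ℝ → ℝ) {ξ θ : ℝ}
    (hξ : 0 ≤ ξ) (hθ : θ ∈ Icc (0 : ℝ) (π / 2)) (t : ℝ) :
    fpSol p α s φ t (ξ * Real.cos θ ^ (p + 1)) * fpSol p α s φ t (ξ * Real.sin θ ^ (p + 1)) -
        fpSol p α s φ t ξ =
      Real.exp (-α * |ξ| ^ s * (1 - Real.exp (-2 * t))) *
        (φ (ξ * Real.exp (-(p + 1) * t) * Real.cos θ ^ (p + 1)) *
          φ (ξ * Real.exp (-(p + 1) * t) * Real.sin θ ^ (p + 1)) -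
            φ (ξ * Real.exp (-(p + 1) * t))) := by
  obtain ⟨hc, hs⟩ := trig_facts hθ
  obtain ⟨w1, w2⟩ := weight_split hqs hξ hc hs
  have hE : Real.exp (-α * |ξ| ^ s * (1 - Real.exp (-2 * t))) =
      Real.exp (-α * |ξ * Real.cos θ ^ (p + 1)| ^ s * (1 - Real.exp (-2 * t))) *
      Real.exp (-α * |ξ * Real.sin θ ^ (p + 1)| ^ s * (1 - Real.exp (-2 * t))) := by
    rw [← Real.exp_add, abs_of_nonneg (mul_nonneg hξ (Real.rpow_nonneg hc _)),
      abs_of_nonneg (mul_nonneg hξ (Real.rpow_nonneg hs _)), abs_of_nonneg hξ, w1, w2]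
    congr 1
    linear_combination (α * ξ ^ s * (1 - Real.exp (-2 * t))) * Real.sin_sq_add_cos_sq θ
  unfold fpSol
  rw [mul_right_comm ξ (Real.exp (-(p + 1) * t)) (Real.cos θ ^ (p + 1)),
    mul_right_comm ξ (Real.exp (-(p + 1) * t)) (Real.sin θ ^ (p + 1)), hE]
  ring

/-- The residual of the Fokker–Planck solution in the Kac equation decays like `e^{-2t}`: it equals
the residual of the initial datum at frequency `ξ e^{-(p+1)t}`, times a factor at most `1`. -/
theorem fpSol_residual {p s k δ L α d : ℝ} (hp : 0 < p) (hp1 : p ≤ 1) (hqs : (p + 1) * s = 2)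
    (hδ : 0 < δ) (hδ1 : δ < 1) (hk : 0 ≤ k) (hα : 0 ≤ α) {φ : ℝ → ℝ}
    (hd : ∀ x > (0 : ℝ), DifferentiableAt ℝ φ x) (hc : Continuous φ) (h1 : φ 0 = 1)
    (hφ1 : ∀ x, |φ x| ≤ 1)
    (hA : Tendsto (fun x => (1 - φ x) / x ^ s) (𝓝[>] 0) (𝓝 α))
    (hH : ∀ x ∈ Ioc (0 : ℝ) L, ∀ y ∈ Ioc (0 : ℝ) L,
      |wderiv s φ x - wderiv s φ y| ≤ k * |x - y| ^ δ)
    {b : ℝ → ℝ} (hb : IntervalIntegrable b volume 0 (π / 2)) (hb0 : ∀ θ, 0 ≤ b θ)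
    (hsupp : ∀ θ > 0, b θ ≠ 0 → θ ≤ |d|) (hd1 : |d| < 1)
    (hnorm : ∫ θ in (0 : ℝ)..(π / 2), b θ * Real.sin θ ^ 2 = 1)
    {ξ : ℝ} (hξ : ξ ∈ Ioc (0 : ℝ) L) {t : ℝ} (ht : 0 ≤ t) :
    |-2 * Real.exp (-α * |ξ| ^ s * (1 - Real.exp (-2 * t))) *
        ((α * φ (ξ * Real.exp (-(p + 1) * t)) + wderiv s φ (ξ * Real.exp (-(p + 1) * t))) *
          (ξ * Real.exp (-(p + 1) * t)) ^ s) -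
      2 * ∫ θ in (0 : ℝ)..(π / 2), b θ * (fpSol p α s φ t (ξ * Real.cos θ ^ (p + 1)) *
        fpSol p α s φ t (ξ * Real.sin θ ^ (p + 1)) - fpSol p α s φ t ξ)| ≤
      2 * ((3 * k * L ^ δ + (α + 2 * k * L ^ δ) ^ 2 * L ^ s) * |d| ^ δ) * ξ ^ s *
        Real.exp (-2 * t) := by
  set E := Real.exp (-α * |ξ| ^ s * (1 - Real.exp (-2 * t))) with hE
  have hE0 : 0 < E := Real.exp_pos _
  have hE1 : E ≤ 1 := Real.exp_le_one_iff.2 (fpSol_exponent_nonpos hα ξ ht)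
  set η := ξ * Real.exp (-(p + 1) * t) with hη
  have hexp : Real.exp (-(p + 1) * t) ≤ 1 := Real.exp_le_one_iff.2 (by nlinarith)
  have hηL : η ∈ Ioc (0 : ℝ) L :=
    ⟨mul_pos hξ.1 (Real.exp_pos _), (mul_le_of_le_one_right hξ.1.le hexp).trans hξ.2⟩
  have hres := residual_bound (q := p + 1) (by linarith) (by linarith) hqs hδ hδ1 hk hα hd hc h1
    hφ1 hA hH hb hb0 hsupp hd1 hnorm hηL
  have hint : (∫ θ in (0 : ℝ)..(π / 2), b θ * (fpSol p α s φ t (ξ * Real.cos θ ^ (p + 1)) *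
        fpSol p α s φ t (ξ * Real.sin θ ^ (p + 1)) - fpSol p α s φ t ξ)) =
      E * ∫ θ in (0 : ℝ)..(π / 2),
        b θ * (φ (η * Real.cos θ ^ (p + 1)) * φ (η * Real.sin θ ^ (p + 1)) - φ η) := by
    rw [← intervalIntegral.integral_const_mul]
    refine intervalIntegral.integral_congr fun θ hθ => ?_
    rw [uIcc_of_le (by positivity)] at hθ
    simp only [fpSol_gain hqs φ hξ.1.le hθ t, ← hE, ← hη]
    ring
  rw [hint]
  set I := ∫ θ in (0 : ℝ)..(π / 2),
        b θ * (φ (η * Real.cos θ ^ (p + 1)) * φ (η * Real.sin θ ^ (p + 1)) - φ η)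
  set W := (α * φ η + wderiv s φ η) * η ^ s
  rw [show -2 * E * W - 2 * (E * I) = -(2 * (E * (I + W))) by ring, abs_neg, abs_mul, abs_mul,
    abs_two, abs_of_pos hE0]
  have e1 := mul_le_mul hE1 hres (abs_nonneg _) zero_le_one
  rw [hη, rescaled_weight hqs hξ.1.le] at e1
  linarith

/-! ### The grazing limit -/

/-- Grazing collision limit of the inelastic Kac model around a Lévy-type
equilibrium: the solutions of the dissipative Kac equations converge, in the
weighted Fourier metric, to the solution of the fractional Fokker–Planck
equation with the same initial datum. -/
theorem grazing_limit_levy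
    (p α : ℝ) (hp : 0 < p) (hp1 : p ≤ 1) (hα : 0 < α)
    -- the grazing collision family {b_ε}
    (b : ℝ → ℝ → ℝ) (c d : ℝ → ℝ)
    (hb_int : ∀ ε > (0 : ℝ), IntegrableOn (b ε) (Icc (-(π / 2)) (π / 2)))
    (hb_even : ∀ ε > (0 : ℝ), ∀ θ, b ε θ = b ε |θ|)
    (hb_nonneg : ∀ ε > (0 : ℝ), ∀ θ, 0 ≤ b ε θ)
    (hc_pos : ∀ ε > (0 : ℝ), 0 < c ε)
    (hsupp : ∀ ε > (0 : ℝ), ∀ θ, b ε θ ≠ 0 → c ε ≤ |θ| ∧ |θ| ≤ d ε)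
    (hd_lim : Tendsto d (𝓝[>] 0) (𝓝 0))
    (hb_norm : ∀ ε > (0 : ℝ), ∫ θ in (0 : ℝ)..(π / 2), b ε θ * Real.sin θ ^ 2 = 1)
    -- the even initial probability density f₀
    (f₀ : ℝ → ℝ) (hf₀_nonneg : ∀ v, 0 ≤ f₀ v) (hf₀_int : Integrable f₀)
    (hf₀_mass : ∫ v, f₀ v = 1) (hf₀_even : ∀ v, f₀ (-v) = f₀ v)
    -- condition (A)
    (hA : Tendsto (fun ξ => (1 - ftEven f₀ ξ) / ξ ^ (2 / (p + 1)))
      (𝓝[>] 0) (𝓝 α))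
    -- condition (B)
    (hdiff : ∀ ξ > (0 : ℝ), DifferentiableAt ℝ (ftEven f₀) ξ)
    (δ : ℝ) (hδ : δ ∈ Ioo (0 : ℝ) 1) (K : ℝ → ℝ) (hK_pos : ∀ R > (0 : ℝ), 0 < K R)
    (hB : ∀ R > (0 : ℝ), ∀ ξ ∈ Ioc (0 : ℝ) R, ∀ τ ∈ Ioc (0 : ℝ) R, ξ ≠ τ →
      |deriv (ftEven f₀) ξ / ξ ^ ((1 - p) / (p + 1)) -
        deriv (ftEven f₀) τ / τ ^ ((1 - p) / (p + 1))| ≤ K R * |ξ - τ| ^ δ)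
    -- the solutions f_ε of the dissipative Kac equations with initial datum f₀
    (fε : ℝ → ℝ → ℝ → ℝ)
    (hfε_nonneg : ∀ ε > (0 : ℝ), ∀ v, ∀ t ∈ Ici (0 : ℝ), 0 ≤ fε ε v t)
    (hfε_int : ∀ ε > (0 : ℝ), ∀ t ∈ Ici (0 : ℝ), Integrable (fun v => fε ε v t))
    (hfε_init : ∀ ε > (0 : ℝ), ∀ v, fε ε v 0 = f₀ v)
    (hfε_eq : ∀ ε > (0 : ℝ), ∀ ξ : ℝ, ∀ t ∈ Ici (0 : ℝ),
      HasDerivWithinAt (fun s => ftEven (fun v => fε ε v s) ξ)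
        (2 * ∫ θ in (0 : ℝ)..(π / 2), b ε θ *
          (ftEven (fun v => fε ε v t) (ξ * Real.cos θ ^ (p + 1)) *
            ftEven (fun v => fε ε v t) (ξ * Real.sin θ ^ (p + 1)) -
            ftEven (fun v => fε ε v t) ξ))
        (Ici 0) t) :
    -- conclusion: lim_{ε→0} sup_{t≥0, ξ≠0} |f̂_ε(ξ,t) - f̂(ξ,t)|/|ξ|^{2/(p+1)} = 0
    ∀ lam > (0 : ℝ), ∃ εbar > (0 : ℝ), ∀ ε, 0 < ε → ε < εbar →
      ∀ t ∈ Ici (0 : ℝ), ∀ ξ : ℝ, ξ ≠ 0 →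
        |ftEven (fun v => fε ε v t) ξ -
          ftEven f₀ (ξ * Real.exp (-(p + 1) * t)) *
            Real.exp (-α * |ξ| ^ (2 / (p + 1)) * (1 - Real.exp (-2 * t)))| /
          |ξ| ^ (2 / (p + 1)) < lam := by
  have hq : 0 < p + 1 := by linarith
  set s := 2 / (p + 1) with hs
  have hqs : (p + 1) * s = 2 := by rw [hs]; field_simp
  have hs1 : 1 ≤ s := by rw [hs, le_div_iff₀ hq]; linarith
  have hs0 : 0 < s := by linarith
  have hsm : (1 - p) / (p + 1) = s - 1 := by rw [hs]; field_simp; ring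
  set φ := ftEven f₀ with hφ
  have hφc : Continuous φ := ftEven_continuous hf₀_int
  have hφ0 : φ 0 = 1 := by simp [hφ, ftEven, hf₀_mass]
  have hφ1 : ∀ x, |φ x| ≤ 1 := fun x => hφ0 ▸ abs_ftEven_le hf₀_int hf₀_nonneg x
  intro lam hlam
  -- beyond the frequency `L` the trivial bound `2 / L ^ s` suffices
  set L := max 1 (4 / lam) with hL
  have hL1 : 1 ≤ L := le_max_left _ _
  have hL0 : 0 < L := by linarith
  have hLs : 2 / L ^ s < lam := by
    have h1 : L ≤ L ^ s := Real.self_le_rpow_of_one_le hL1 hs1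
    have h2 : 4 ≤ L * lam := (div_le_iff₀ hlam).1 (le_max_right _ _)
    rw [div_lt_iff₀ (by linarith)]
    nlinarith
  set k := K L / s with hkdef
  have hk : 0 ≤ k := (div_pos (hK_pos L hL0) hs0).le
  have hH : ∀ x ∈ Ioc (0 : ℝ) L, ∀ y ∈ Ioc (0 : ℝ) L,
      |wderiv s φ x - wderiv s φ y| ≤ k * |x - y| ^ δ := by
    intro x hx y hy
    rcases eq_or_ne x y with h | h
    · rw [h, sub_self, abs_zero]
      exact mul_nonneg hk (Real.rpow_nonneg (abs_nonneg _) _)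
    · have h1 := hB L hL0 x hx y hy h
      rw [hsm] at h1
      unfold wderiv
      rw [← sub_div, abs_div, abs_of_pos hs0, hkdef, div_mul_eq_mul_div]
      gcongr
  set M := 3 * k * L ^ δ + (α + 2 * k * L ^ δ) ^ 2 * L ^ s with hM
  have hM0 : 0 ≤ M := by
    have := Real.rpow_nonneg hL0.le δ
    have := Real.rpow_nonneg hL0.le s
    positivity
  have hdabs : Tendsto (fun ε => |d ε|) (𝓝[>] 0) (𝓝 0) := by simpa using hd_lim.abs
  have hMd : Tendsto (fun ε => M * |d ε| ^ δ) (𝓝[>] 0) (𝓝 0) := by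
    have := (hdabs.rpow_const (p := δ) (Or.inr hδ.1.le)).const_mul M
    rwa [Real.zero_rpow hδ.1.ne', mul_zero] at this
  obtain ⟨εbar, hε0, hεbar⟩ := mem_nhdsGT_iff_exists_Ioo_subset.1
    ((hdabs.eventually_lt_const one_pos).and (hMd.eventually_lt_const hlam))
  refine ⟨εbar, hε0, fun ε hε hεlt t ht ξ hξ => ?_⟩
  obtain ⟨hd1, hsmall⟩ := hεbar ⟨hε, hεlt⟩
  have hb : IntervalIntegrable (b ε) volume 0 (π / 2) := by
    rw [intervalIntegrable_iff_integrableOn_Icc_of_le (by positivity)]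
    exact (hb_int ε hε).mono_set (Icc_subset_Icc (by linarith [Real.pi_pos]) le_rfl)
  have hsuppε : ∀ θ > 0, b ε θ ≠ 0 → θ ≤ |d ε| := fun θ _ h =>
    (le_abs_self θ).trans ((hsupp ε hε θ h).2.trans (le_abs_self _))
  set g : ℝ → ℝ → ℝ := fun t ξ => ftEven (fun v => fε ε v t) ξ with hg
  have hg0 : ∀ x, g 0 x = φ x := fun x => by simp [hg, hfε_init ε hε, hφ]
  have hgz : ∀ t ∈ Ici (0 : ℝ), g t 0 = 1 := fun t ht => by
    refine mass_eq_one (y := fun t => g t 0) (β := ∫ θ in (0 : ℝ)..(π / 2), b ε θ)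
      (by simp only [hg0, hφ0]) (fun t ht => ?_) ht
    have h1 := hfε_eq ε hε 0 t ht
    simp only [zero_mul, intervalIntegral.integral_mul_const] at h1
    exact h1
  have hg1 : ∀ t ∈ Ici (0 : ℝ), ∀ x, |g t x| ≤ 1 := fun t ht x => by
    have h1 := abs_ftEven_le (hfε_int ε hε t ht) (fun v => hfε_nonneg ε hε v t ht) x
    exact h1.trans (hgz t ht).le
  have hF1 : ∀ t ∈ Ici (0 : ℝ), ∀ x, |fpSol p α s φ t x| ≤ 1 := fun t ht x => by
    unfold fpSol
    rw [abs_mul, Real.abs_exp]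
    exact mul_le_one₀ (hφ1 _) (Real.exp_pos _).le
      (Real.exp_le_one_iff.2 (fpSol_exponent_nonpos hα.le x ht))
  have hFc : ∀ t ∈ Ici (0 : ℝ), Continuous (fpSol p α s φ t) := fun t _ => by
    have h1 : Continuous fun x : ℝ => |x| ^ s :=
      continuous_abs.rpow_const fun _ => Or.inr hs0.le
    unfold fpSol
    fun_prop
  change |g t ξ - fpSol p α s φ t ξ| / |ξ| ^ s < lam
  have hξ0 : 0 < |ξ| := abs_pos.2 hξ
  have hpow : 0 < |ξ| ^ s := Real.rpow_pos_of_pos hξ0 _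
  rcases le_or_gt |ξ| L with hle | hgt
  · have hgabs : g t ξ = g t |ξ| := (ftEven_abs _ ξ).symm
    have hFabs : fpSol p α s φ t ξ = fpSol p α s φ t |ξ| := by
      unfold fpSol
      have h1 : |ξ| * Real.exp (-(p + 1) * t) = |ξ * Real.exp (-(p + 1) * t)| := by
        rw [abs_mul, Real.abs_exp]
      rw [abs_abs, h1, hφ, ftEven_abs]
    have key := kac_stability (r := 2 * (M * |d ε| ^ δ)) (L := L) hq hqs
      (mul_nonneg zero_le_two (mul_nonneg hM0 (Real.rpow_nonneg (abs_nonneg _) _))) hb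
      (hb_nonneg ε hε) (g := g) (F := fpSol p α s φ)
      (fun t ht => ftEven_continuous (hfε_int ε hε t ht)) hFc hg1 hF1
      (fun t ht => by rw [hgz t ht]; simp [fpSol, hφ0, Real.zero_rpow hs0.ne'])
      (fun x => by rw [hg0]; simp [fpSol])
      (fun ξ _ t ht => hfε_eq ε hε ξ t ht)
      (fun ξ hξ t _ => (fpSol_hasDeriv hs0 hqs hdiff hξ.1 t).hasDerivWithinAt)
      (fun ξ hξ t ht => fpSol_residual hp hp1 hqs hδ.1 hδ.2 hk hα.le hdiff hφc hφ0 hφ1 hA hH hb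
        (hb_nonneg ε hε) hsuppε hd1 (hb_norm ε hε) hξ ht)
      (ξ := |ξ|) ⟨hξ0.le, hle⟩ ht
    rw [hgabs, hFabs, div_lt_iff₀ hpow]
    refine key.trans_lt (mul_lt_mul_of_pos_right ?_ hpow)
    have h1 : 0 ≤ M * |d ε| ^ δ := mul_nonneg hM0 (Real.rpow_nonneg (abs_nonneg _) _)
    nlinarith [mul_nonneg h1 (Real.exp_pos (-2 * t)).le]
  · have h1 : |g t ξ - fpSol p α s φ t ξ| ≤ 2 := by
      have := (abs_sub _ _).trans (add_le_add (hg1 t ht ξ) (hF1 t ht ξ))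
      linarith
    have h2 : L ^ s ≤ |ξ| ^ s := Real.rpow_le_rpow hL0.le hgt.le hs0.le
    refine lt_of_le_of_lt ?_ hLs
    exact div_le_div₀ zero_le_two h1 (Real.rpow_pos_of_pos hL0 _) h2

end
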